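/- For every positive integer d and every v ∈ {0,1}^d with e_{d−1} ≺_rlex v (so that P(v) is full-dimensional in ℝ^d), the number f of facets of P(v) satisfies 2d − 1 ≤ f ≤ 3d − 2. Moreover, f = 2d − 1 holds if and only if s(v) = 2, and for d ≥ 3, f = 3d − 2 holds if and only if v = e_0 + e_{d−2} + e_{d−1}. -/

import Mathlib

/-!
Let `S` be the support of `v`; full-dimensionality means that the top index `d - 1` lies in `S` and
`S` has at least two elements.

*Linear description.* The 0/1-points below `v` are those 0/1-points satisfying
`x i ≤ ∑_{j ∈ S, j > i} (1 - x j)` for `i ∉ S` and `1 ≤ ∑_{j ∈ S} (1 - x j)`. Together with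
`0 ≤ x i ≤ 1` these inequalities describe `P(v)` (`Pset_eq_Qset`). For integrality, a point `x` of
the polytope is written as an average of 0/1-points by systematic sampling: lay out the numbers
`1 - x j`, `j ∈ S`, as consecutive intervals, mark those hit by `θ + ℤ`, and round `x i`, `i ∉ S`,
to `1` iff `θ < x i`. For each `θ ∈ [0, 1)` the rounded point satisfies the inequalities because
the partial sums telescope (`sum_sample`), and its mean over `θ` is `x` since
`∫₀¹ ⌈B - θ⌉ dθ = B`.

*Irredundancy.* Put `T_r = {r} ∪ {j ∈ S | j > r}` for `r` in the set `R` consisting of `min S` and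
of the non-members of `S` above `min S` (`T_{min S} = S`). The description shrinks to `x i ≥ 0` for
all `i`, to `∑_{j ∈ T_r} x j ≤ #T_r - 1` for `r ∈ R`, and to `x u ≤ 1` for those `u` lying in no
two-element `T_r`. Each of these is violated by a point satisfying the others, namely `-e_i`, the
indicator of `T_r` (the `T_r` form an antichain), and `2 e_u`. A full-dimensional polytope with an
irredundant description has exactly one facet per inequality (`ncard_facets`).

*Counting.* Two-element sets `T_r` have the form `{r, d - 1}`. If `G` is the set of `r ∈ R` with
`#T_r ≥ 3` and `B` that of `r ∈ R` with `#T_r = 2`, then the number of facets is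
`2 d + #G - [B ≠ ∅]` (`card_Idx`). For `#S = 2` one has `G = ∅` and `min S ∈ B`; otherwise
`min S ∈ G`. As `G ⊆ {0, …, d - 3}`, the number is at most `3 d - 2`, with equality iff `B = ∅` and
`G = {0, …, d - 3}`, which means `S = {0, d - 2, d - 1}` (`extremal_iff`).
-/

open Finset

/-- The set of 0/1-vectors in ℝ^d. -/
def ZeroOne (d : ℕ) : Set (Fin d → ℝ) := {x | ∀ i, x i = 0 ∨ x i = 1}

/-- `x` is reverse-lexicographically smaller than `y`:
there is an index `m` with `x m < y m` and `x i = y i` for all `i > m`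
(equivalently, `x m < y m` for `m` the largest index where `x` and `y` differ). -/
def RlexLt {d : ℕ} (x y : Fin d → ℝ) : Prop :=
  ∃ m : Fin d, x m < y m ∧ ∀ i : Fin d, m < i → x i = y i

/-- `X(v)`: the 0/1-points revlex-smaller than `v`. -/
def Xset {d : ℕ} (v : Fin d → ℝ) : Set (Fin d → ℝ) :=
  {x | x ∈ ZeroOne d ∧ RlexLt x v}

/-- The revlex-initial 0/1-polytope `P(v) = conv X(v)`. -/
noncomputable def Pset {d : ℕ} (v : Fin d → ℝ) : Set (Fin d → ℝ) :=
  convexHull ℝ (Xset v)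

/-- `Sig(v)`: the support of `v` (the indices of its one-entries). -/
noncomputable def Sig {d : ℕ} (v : Fin d → ℝ) : Finset (Fin d) :=
  @Finset.filter (Fin d) (fun i => v i = 1) (Classical.decPred _) Finset.univ

/-- `Sig_{>i}(v)`: the elements of `Sig(v)` above `i`. -/
noncomputable def SigGt {d : ℕ} (v : Fin d → ℝ) (i : Fin d) : Finset (Fin d) :=
  (Sig v).filter (fun j => i < j)

/-- The dimension of the affine hull of a set in ℝ^d. -/
noncomputable def adim {d : ℕ} (s : Set (Fin d → ℝ)) : ℕ :=
  Module.finrank ℝ (affineSpan ℝ s).direction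

/-- A face of a polytope: a convex extreme subset. -/
def IsFaceOf {d : ℕ} (P F : Set (Fin d → ℝ)) : Prop :=
  Convex ℝ F ∧ IsExtreme ℝ P F

/-- The number of indices satisfying a predicate. -/
noncomputable def cnt {d : ℕ} (p : Fin d → Prop) : ℕ :=
  (@Finset.filter (Fin d) p (Classical.decPred _) Finset.univ).card

/-! ### Facets of an irredundantly described polyhedron -/

theorem exists_small_step {ι : Type*} [Finite ι] (p q r : ι → ℝ) (h : ∀ l, p l < r l) :
    ∃ ε : ℝ, 0 < ε ∧ ∀ l, p l + ε * q l ≤ r l := by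
  have h1 : ∀ᶠ ε in nhdsWithin (0 : ℝ) (Set.Ioi 0), ∀ l, p l + ε * q l < r l := by
    rw [Filter.eventually_all]
    intro l
    have hc : ContinuousAt (fun ε : ℝ => p l + ε * q l) 0 := by fun_prop
    have := hc.eventually_lt (continuousAt_const (y := r l)) (by simpa using h l)
    exact this.filter_mono nhdsWithin_le_nhds
  obtain ⟨ε, h2, h3⟩ := (h1.and self_mem_nhdsWithin).exists
  exact ⟨ε, h3, fun l => (h2 l).le⟩

/-- The face of the polyhedron `{x | ∀ l, a l x ≤ b l}` where the `k`-th inequality is tight. -/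
def tightFace {d : ℕ} {ι : Type*} (a : ι → Module.Dual ℝ (Fin d → ℝ)) (b : ι → ℝ) (k : ι) :
    Set (Fin d → ℝ) :=
  {x | (∀ l, a l x ≤ b l) ∧ a k x = b k}

theorem adim_eq {d : ℕ} (s : Set (Fin d → ℝ)) :
    adim s = Module.finrank ℝ (vectorSpan ℝ s) := by
  rw [adim, direction_affineSpan]

/-- On the segment from the interior point `y` to a point `z` violating only inequality `k`
lies a point where `k` is tight and every other inequality is strict. -/
theorem exists_tight_point {d : ℕ} {ι : Type*} (a : ι → Module.Dual ℝ (Fin d → ℝ)) (b : ι → ℝ)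
    (y z : Fin d → ℝ) (k : ι) (hy : ∀ l, a l y < b l) (hz : b k < a k z)
    (hz' : ∀ l, l ≠ k → a l z ≤ b l) :
    ∃ w, a k w = b k ∧ ∀ l, l ≠ k → a l w < b l := by
  have hk := hy k
  have hD : 0 < a k z - a k y := by linarith
  set t := (b k - a k y) / (a k z - a k y) with ht
  have ht0 : 0 < t := div_pos (by linarith) hD
  have ht1 : t < 1 := by rw [ht, div_lt_one hD]; linarith
  have htm : t * (a k z - a k y) = b k - a k y := div_mul_cancel₀ _ hD.ne'
  refine ⟨(1 - t) • y + t • z, ?_, fun l hl => ?_⟩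
  · simp only [map_add, map_smul, smul_eq_mul]
    linarith
  · simp only [map_add, map_smul, smul_eq_mul]
    have h1 := mul_lt_mul_of_pos_left (hy l) (show 0 < 1 - t by linarith)
    have h2 := mul_le_mul_of_nonneg_left (hz' l hl) ht0.le
    linarith

theorem vectorSpan_tightFace {d : ℕ} {ι : Type*} [Finite ι]
    (a : ι → Module.Dual ℝ (Fin d → ℝ)) (b : ι → ℝ)
    (k : ι) (w : Fin d → ℝ) (hw : a k w = b k) (hw' : ∀ l, l ≠ k → a l w < b l) :
    vectorSpan ℝ (tightFace a b k) = LinearMap.ker (a k) := by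
  apply le_antisymm
  · rw [vectorSpan_def, Submodule.span_le]
    rintro _ ⟨p, hp, q, hq, rfl⟩
    simp [hp.2, hq.2]
  · intro u hu
    rw [LinearMap.mem_ker] at hu
    obtain ⟨ε, hε, h⟩ := exists_small_step (ι := {l // l ≠ k}) (fun l => a l w) (fun l => a l u)
      (fun l => b l) (fun l => hw' l l.2)
    have hmem : w + ε • u ∈ tightFace a b k := by
      refine ⟨fun l => ?_, by simp [hu, hw]⟩
      by_cases hl : l = k
      · subst hl; simp [hu, hw]
      · simpa using h ⟨l, hl⟩
    have hmem0 : w ∈ tightFace a b k := by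
      refine ⟨fun l => ?_, hw⟩
      by_cases hl : l = k
      · subst hl; exact hw.le
      · exact (hw' l hl).le
    have := vsub_mem_vectorSpan ℝ hmem hmem0
    simp only [vsub_eq_sub, add_sub_cancel_left] at this
    exact (Submodule.smul_mem_iff _ hε.ne').1 this

theorem isFaceOf_tightFace {d : ℕ} {ι : Type*} (a : ι → Module.Dual ℝ (Fin d → ℝ)) (b : ι → ℝ)
    (k : ι) : IsFaceOf {x | ∀ l, a l x ≤ b l} (tightFace a b k) := by
  refine ⟨?_, ⟨fun x hx => hx.1, ?_⟩⟩
  · intro x hx y hy s t hs ht hst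
    refine ⟨fun l => ?_, ?_⟩
    · simp only [map_add, map_smul, smul_eq_mul]
      have h1 := mul_le_mul_of_nonneg_left (hx.1 l) hs
      have h2 := mul_le_mul_of_nonneg_left (hy.1 l) ht
      calc _ ≤ s * b l + t * b l := add_le_add h1 h2
        _ = b l := by rw [← add_mul, hst, one_mul]
    · simp only [map_add, map_smul, smul_eq_mul, hx.2, hy.2]
      rw [← add_mul, hst, one_mul]
  · rintro x hx y hy z hz ⟨s, t, hs, ht, hst, rfl⟩
    refine ⟨hx, le_antisymm (hx k) ?_⟩
    have h2 := mul_le_mul_of_nonneg_left (hy k) ht.le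
    have h3 := hz.2
    simp only [map_add, map_smul, smul_eq_mul] at h3
    have h4 : s * b k ≤ s * a k x := by
      have : s * b k + t * b k = b k := by rw [← add_mul, hst, one_mul]
      linarith
    exact le_of_mul_le_mul_left h4 hs

/-- A nonempty convex subset of a polyhedron contains a point at which only those inequalities
are tight that are tight on the whole subset: average one slack point per inequality. -/
theorem exists_generic_point {d : ℕ} {ι : Type*} [Fintype ι] [Nonempty ι]
    (a : ι → Module.Dual ℝ (Fin d → ℝ)) (b : ι → ℝ) (F : Set (Fin d → ℝ)) (hF : F.Nonempty)
    (hc : Convex ℝ F) (hP : ∀ x ∈ F, ∀ l, a l x ≤ b l) :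
    ∃ y ∈ F, ∀ l, a l y = b l → ∀ x ∈ F, a l x = b l := by
  have h : ∀ l, ∃ p ∈ F, a l p = b l → ∀ x ∈ F, a l x = b l := by
    intro l
    by_cases hl : ∀ x ∈ F, a l x = b l
    · exact ⟨hF.some, hF.some_mem, fun _ => hl⟩
    · push Not at hl
      obtain ⟨x, hx, hx'⟩ := hl
      exact ⟨x, hx, fun h => absurd h hx'⟩
  choose p hpF hp using h
  have hn : (0 : ℝ) < (Fintype.card ι : ℝ) := by exact_mod_cast Fintype.card_pos
  refine ⟨∑ l, (Fintype.card ι : ℝ)⁻¹ • p l, ?_, ?_⟩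
  · refine hc.sum_mem (fun _ _ => by positivity) ?_ (fun l _ => hpF l)
    simp [hn.ne']
  · intro l hl
    apply hp l
    by_contra hne
    have hlt : a l (p l) < b l := lt_of_le_of_ne (hP _ (hpF l) l) hne
    have : ∑ j, (Fintype.card ι : ℝ)⁻¹ * a l (p j) < ∑ _j : ι, (Fintype.card ι : ℝ)⁻¹ * b l := by
      apply Finset.sum_lt_sum
      · intro j _
        exact mul_le_mul_of_nonneg_left (hP _ (hpF j) l) (by positivity)
      · exact ⟨l, Finset.mem_univ _, mul_lt_mul_of_pos_left hlt (by positivity)⟩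
    simp only [map_sum, map_smul, smul_eq_mul] at hl
    rw [hl] at this
    simp [hn.ne'] at this

theorem facet_eq_tightFace {d : ℕ} (hd : 2 ≤ d) {ι : Type*} [Fintype ι] [Nonempty ι]
    (a : ι → Module.Dual ℝ (Fin d → ℝ)) (b : ι → ℝ)
    (w : ι → Fin d → ℝ) (hw : ∀ k, a k (w k) = b k) (hw' : ∀ k l, l ≠ k → a l (w k) < b l)
    (y₀ : Fin d → ℝ) (hy₀ : ∀ l, a l y₀ < b l)
    (F : Set (Fin d → ℝ)) (hF : IsFaceOf {x | ∀ l, a l x ≤ b l} F) (hdim : adim F = d - 1) :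
    ∃ k, tightFace a b k = F := by
  have hne : F.Nonempty := by
    rw [Set.nonempty_iff_ne_empty]
    rintro rfl
    rw [adim_eq, vectorSpan_empty] at hdim
    simp at hdim
    omega
  have hker : ∀ k, Module.finrank ℝ (LinearMap.ker (a k)) = d - 1 := by
    intro k
    have h0 : a k ≠ 0 := by
      intro h0
      have h1 := hy₀ k
      have h2 := hw k
      rw [h0] at h1 h2
      simp at h1 h2
      linarith
    have := Module.Dual.finrank_ker_add_one_of_ne_zero h0
    simp at this
    omega
  have hP : ∀ x ∈ F, ∀ l, a l x ≤ b l := fun x hx => hF.2.subset hx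
  obtain ⟨y, hyF, hy⟩ := exists_generic_point a b F hne hF.1 hP
  -- A point of the polyhedron at which all inequalities tight at `y` are tight lies in `F`,
  -- because `y` is in the interior of a segment starting there.
  have key : ∀ z, (∀ l, a l z ≤ b l) → (∀ l, a l y = b l → a l z = b l) → z ∈ F := by
    intro z hz hzt
    obtain ⟨ε, hε, h⟩ := exists_small_step (ι := {l // a l y ≠ b l}) (fun l => a l y)
      (fun l => a l y - a l z) (fun l => b l) (fun l => lt_of_le_of_ne (hP y hyF l) l.2)
    have hmem : y + ε • (y - z) ∈ {x | ∀ l, a l x ≤ b l} := by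
      intro l
      by_cases hl : a l y = b l
      · simp [hl, hzt l hl]
      · simpa using h ⟨l, hl⟩
    refine hF.2.left_mem_of_mem_openSegment hz hmem hyF
      ⟨ε / (1 + ε), 1 / (1 + ε), by positivity, by positivity, by field_simp; ring, ?_⟩
    ext i
    simp
    field_simp
    ring
  have hex : ∃ k, a k y = b k := by
    by_contra hno
    push Not at hno
    have hall : vectorSpan ℝ F = ⊤ := by
      rw [eq_top_iff]
      intro u _
      obtain ⟨ε, hε, h⟩ := exists_small_step (fun l => a l y₀) (fun l => a l u) b hy₀
      have h1 : y₀ + ε • u ∈ F := key _ (by simpa using h) (fun l hl => absurd hl (hno l))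
      have h2 : y₀ ∈ F := key _ (fun l => (hy₀ l).le) (fun l hl => absurd hl (hno l))
      have := vsub_mem_vectorSpan ℝ h1 h2
      simp only [vsub_eq_sub, add_sub_cancel_left] at this
      exact (Submodule.smul_mem_iff _ hε.ne').1 this
    rw [adim_eq, hall] at hdim
    simp at hdim
    omega
  obtain ⟨k, hk⟩ := hex
  have hspan : ∀ l, a l y = b l → vectorSpan ℝ F = LinearMap.ker (a l) := by
    intro l hl
    apply Submodule.eq_of_le_of_finrank_eq
    · rw [vectorSpan_def, Submodule.span_le]
      rintro _ ⟨p, hp, q, hq, rfl⟩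
      simp [hy l hl p hp, hy l hl q hq]
    · rw [hker, ← adim_eq, hdim]
  -- Only inequality `k` is tight at `y`: a second one would be tight at `w k` as well.
  have huniq : ∀ l, a l y = b l → l = k := by
    intro l hl
    by_contra hlk
    have h1 : w k - y ∈ LinearMap.ker (a k) := by simp [hw k, hk]
    rw [← hspan k hk, hspan l hl] at h1
    have := hw' k l hlk
    simp only [LinearMap.mem_ker, map_sub, hl] at h1
    linarith
  refine ⟨k, Set.Subset.antisymm ?_ ?_⟩
  · intro z hz
    exact key z hz.1 (fun l hl => by rw [huniq l hl]; exact hz.2)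
  · intro z hz
    exact ⟨hP z hz, hy k hk z hz⟩

/-- A full-dimensional polyhedron described by irredundant inequalities has exactly one facet per
inequality. Irredundancy is witnessed by points `z k` violating only the `k`-th inequality. -/
theorem ncard_facets {d : ℕ} (hd : 2 ≤ d) {ι : Type*} [Fintype ι] [Nonempty ι]
    (a : ι → Module.Dual ℝ (Fin d → ℝ)) (b : ι → ℝ)
    (y : Fin d → ℝ) (hy : ∀ l, a l y < b l)
    (z : ι → Fin d → ℝ) (hz : ∀ k, b k < a k (z k)) (hz' : ∀ k l, l ≠ k → a l (z k) ≤ b l) :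
    Set.ncard {F : Set (Fin d → ℝ) | IsFaceOf {x | ∀ l, a l x ≤ b l} F ∧ adim F = d - 1} =
      Fintype.card ι := by
  choose w hw hw' using fun k => exists_tight_point a b y (z k) k hy (hz k) (hz' k)
  have hset : {F : Set (Fin d → ℝ) | IsFaceOf {x | ∀ l, a l x ≤ b l} F ∧ adim F = d - 1} =
      tightFace a b '' Set.univ := by
    ext F
    simp only [Set.mem_ofPred_eq, Set.image_univ, Set.mem_range]
    constructor
    · rintro ⟨hF, hdim⟩
      exact facet_eq_tightFace hd a b w hw hw' y hy F hF hdim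
    · rintro ⟨k, rfl⟩
      refine ⟨isFaceOf_tightFace a b k, ?_⟩
      rw [adim_eq, vectorSpan_tightFace a b k (w k) (hw k) (hw' k)]
      have h0 : a k ≠ 0 := by
        intro h0
        have h1 := hy k
        have h2 := hw k
        rw [h0] at h1 h2
        simp at h1 h2
        linarith
      have := Module.Dual.finrank_ker_add_one_of_ne_zero h0
      simp at this
      omega
  have hinj : Function.Injective (tightFace a b) := by
    intro k l hkl
    by_contra hne
    have h1 : w k ∈ tightFace a b k := by
      refine ⟨fun j => ?_, hw k⟩
      by_cases hj : j = k
      · subst hj; exact (hw j).le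
      · exact (hw' k j hj).le
    rw [hkl] at h1
    exact (hw' k l (Ne.symm hne)).ne h1.2
  rw [hset, Set.ncard_image_of_injective _ hinj, Set.ncard_univ, Nat.card_eq_fintype_card]

/-! ### A linear description by systematic sampling -/

/-- The members of `S` above `i`. -/
def up {d : ℕ} (S : Finset (Fin d)) (i : Fin d) : Finset (Fin d) := S.filter (fun j => i < j)

theorem mem_up {d : ℕ} {S : Finset (Fin d)} {i j : Fin d} : j ∈ up S i ↔ j ∈ S ∧ i < j := by
  simp [up]

/-- The polytope given by the box constraints and, with `S` the support of `v`, the inequalities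
`x i ≤ ∑_{j ∈ S, j > i} (1 - x j)` for `i ∉ S` together with `1 ≤ ∑_{j ∈ S} (1 - x j)`. -/
def Qset {d : ℕ} (S : Finset (Fin d)) : Set (Fin d → ℝ) :=
  {x | (∀ i, 0 ≤ x i ∧ x i ≤ 1) ∧ (∀ i ∉ S, x i ≤ ∑ j ∈ up S i, (1 - x j)) ∧
    1 ≤ ∑ j ∈ S, (1 - x j)}

theorem mem_Sig {d : ℕ} {v : Fin d → ℝ} {i : Fin d} : i ∈ Sig v ↔ v i = 1 := by
  simp [Sig]

theorem mem_Qset_of_mem_Xset {d : ℕ} {v : Fin d → ℝ} (hv : v ∈ ZeroOne d) {x : Fin d → ℝ}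
    (hx : x ∈ Xset v) : x ∈ Qset (Sig v) := by
  obtain ⟨hx01, m, hm, hgt⟩ := hx
  have hbox : ∀ i, 0 ≤ x i ∧ x i ≤ 1 := by
    intro i
    rcases hx01 i with h | h <;> simp [h]
  have hvm : v m = 1 := by
    rcases hv m with h | h
    · have := (hbox m).1; linarith
    · exact h
  have hxm : x m = 0 := by
    rcases hx01 m with h | h
    · exact h
    · linarith
  have hnn : ∀ j, 0 ≤ 1 - x j := fun j => by linarith [(hbox j).2]
  refine ⟨hbox, fun i hi => ?_, ?_⟩
  · rcases lt_trichotomy i m with h | h | h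
    · have := Finset.single_le_sum (f := fun j => 1 - x j) (fun j _ => hnn j)
        (mem_up.2 ⟨mem_Sig.2 hvm, h⟩)
      simp only [hxm] at this
      linarith [(hbox i).2]
    · subst h
      exact absurd (mem_Sig.2 hvm) hi
    · rw [hgt i h]
      rw [mem_Sig] at hi
      rw [(hv i).resolve_right hi]
      exact Finset.sum_nonneg fun j _ => hnn j
  · have := Finset.single_le_sum (f := fun j => 1 - x j) (fun j _ => hnn j) (mem_Sig.2 hvm)
    simp only [hxm] at this
    linarith

theorem mem_Xset_of_mem_Qset {d : ℕ} {v : Fin d → ℝ} (hv : v ∈ ZeroOne d) {x : Fin d → ℝ}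
    (hx01 : x ∈ ZeroOne d) (hx : x ∈ Qset (Sig v)) : x ∈ Xset v := by
  obtain ⟨hbox, h1, h2⟩ := hx
  refine ⟨hx01, ?_⟩
  have hne : ((Sig v).filter (fun j => x j = 0)).Nonempty := by
    by_contra hno
    rw [Finset.not_nonempty_iff_eq_empty, Finset.filter_eq_empty_iff] at hno
    have : ∑ j ∈ Sig v, (1 - x j) = 0 := by
      apply Finset.sum_eq_zero
      intro j hj
      rw [(hx01 j).resolve_left (hno hj)]; norm_num
    linarith
  set m := ((Sig v).filter (fun j => x j = 0)).max' hne with hm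
  have hmm := Finset.max'_mem _ hne
  rw [← hm, Finset.mem_filter, mem_Sig] at hmm
  have habove : ∀ j, m < j → j ∈ Sig v → x j = 1 := by
    intro j hj hjS
    refine (hx01 j).resolve_left fun h0 => ?_
    exact absurd (Finset.le_max' _ j (Finset.mem_filter.2 ⟨hjS, h0⟩)) (not_le.2 hj)
  refine ⟨m, by rw [hmm.1, hmm.2]; norm_num, fun i hi => ?_⟩
  by_cases hiS : i ∈ Sig v
  · rw [habove i hi hiS, mem_Sig.1 hiS]
  · have h3 := h1 i hiS
    rw [Finset.sum_eq_zero] at h3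
    · rw [mem_Sig] at hiS
      rw [(hv i).resolve_right hiS]
      exact le_antisymm h3 (hbox i).1
    · intro j hj
      rw [mem_up] at hj
      rw [habove j (hi.trans hj.2) hj.1]; norm_num

/-- Telescoping from the top index downwards along the partial sums of `y` over `T`. -/
theorem sum_telescope {d : ℕ} (T : Finset (Fin d)) (y : Fin d → ℝ) (h : ℝ → ℝ) :
    ∑ j ∈ T, (h (∑ k ∈ up T j, y k + y j) - h (∑ k ∈ up T j, y k)) = h (∑ k ∈ T, y k) - h 0 := by
  induction T using Finset.induction_on_min with
  | empty => simp
  | insert a s hlt ih =>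
    have ha : a ∉ s := fun h => lt_irrefl a (hlt a h)
    have h1 : up (insert a s) a = s := by
      ext j; simp only [mem_up, Finset.mem_insert]
      constructor
      · rintro ⟨rfl | hj, hj'⟩
        · exact absurd hj' (lt_irrefl _)
        · exact hj
      · exact fun hj => ⟨Or.inr hj, hlt j hj⟩
    have h2 : ∀ j ∈ s, up (insert a s) j = up s j := by
      intro j hj
      ext k; simp only [mem_up, Finset.mem_insert]
      constructor
      · rintro ⟨rfl | hk, hk'⟩
        · exact absurd hk' (not_lt.2 (hlt j hj).le)
        · exact ⟨hk, hk'⟩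
      · exact fun hk => ⟨Or.inr hk.1, hk.2⟩
    rw [Finset.sum_insert ha, Finset.sum_insert ha, h1]
    have h3 : ∑ j ∈ s, (h (∑ k ∈ up (insert a s) j, y k + y j) -
        h (∑ k ∈ up (insert a s) j, y k)) =
        ∑ j ∈ s, (h (∑ k ∈ up s j, y k + y j) - h (∑ k ∈ up s j, y k)) :=
      Finset.sum_congr rfl fun j hj => by rw [h2 j hj]
    rw [h3, ih, add_comm (y a)]
    ring

theorem ceil_sub_eq {B θ : ℝ} (h0 : 0 ≤ θ) (h1 : θ < 1) :
    ((⌈B - θ⌉ : ℤ) : ℝ) = (⌊B⌋ : ℝ) + (Set.Iio (Int.fract B)).indicator (fun _ => (1 : ℝ)) θ := by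
  have hB := Int.floor_add_fract B
  have hf0 := Int.fract_nonneg B
  have hf1 := Int.fract_lt_one B
  by_cases h : θ < Int.fract B
  · rw [Set.indicator_of_mem (by exact h)]
    have : ⌈B - θ⌉ = ⌊B⌋ + 1 := by
      rw [Int.ceil_eq_iff]; push_cast; constructor <;> linarith
    rw [this]; push_cast; ring
  · rw [Set.indicator_of_notMem (by exact h)]
    push Not at h
    have : ⌈B - θ⌉ = ⌊B⌋ := by
      rw [Int.ceil_eq_iff]; constructor <;> linarith
    rw [this]; simp

open MeasureTheory in
theorem integrable_ceil (B : ℝ) :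
    Integrable (fun θ : ℝ => ((⌈B - θ⌉ : ℤ) : ℝ)) (volume.restrict (Set.Ico 0 1)) := by
  have h : IntegrableOn (fun θ : ℝ => (⌊B⌋ : ℝ) +
      (Set.Iio (Int.fract B)).indicator (fun _ => (1 : ℝ)) θ) (Set.Ico 0 1) volume :=
    (integrable_const _).add ((integrable_const _).indicator measurableSet_Iio)
  exact h.congr_fun (fun θ hθ => (ceil_sub_eq hθ.1 hθ.2).symm) measurableSet_Ico

open MeasureTheory in
theorem integral_ceil (B : ℝ) : ∫ θ in Set.Ico (0 : ℝ) 1, ((⌈B - θ⌉ : ℤ) : ℝ) = B := by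
  rw [setIntegral_congr_fun measurableSet_Ico (fun θ hθ => ceil_sub_eq hθ.1 hθ.2)]
  rw [integral_add (integrable_const _) ((integrable_const _).indicator measurableSet_Iio)]
  rw [integral_indicator measurableSet_Iio, Measure.restrict_restrict measurableSet_Iio]
  have : Set.Iio (Int.fract B) ∩ Set.Ico 0 1 = Set.Ico 0 (Int.fract B) := by
    ext θ
    simp only [Set.mem_inter_iff, Set.mem_Iio, Set.mem_Ico]
    have := Int.fract_lt_one B
    constructor
    · rintro ⟨h1, h2, h3⟩; exact ⟨h2, h1⟩
    · rintro ⟨h1, h2⟩; exact ⟨h2, h1, h2.trans this⟩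
  rw [this]
  simp [Int.fract_nonneg]

/-- Systematic sampling of `x` at threshold `θ`: the numbers `1 - x j`, `j ∈ S`, are laid out
consecutively (from the top index downwards) as intervals on the real line, and `1 - x j` is
rounded to the number of points of `θ + ℤ` in its interval; `x i` for `i ∉ S` is rounded to `1`
iff `θ < x i`. -/
noncomputable def sample {d : ℕ} (S : Finset (Fin d)) (x : Fin d → ℝ) (θ : ℝ) : Fin d → ℝ :=
  fun i => if i ∈ S then
      1 - (((⌈∑ j ∈ up S i, (1 - x j) + (1 - x i) - θ⌉ : ℤ) : ℝ) -
        ((⌈∑ j ∈ up S i, (1 - x j) - θ⌉ : ℤ) : ℝ))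
    else ((⌈x i - θ⌉ : ℤ) : ℝ)

theorem sample_zeroOne {d : ℕ} (S : Finset (Fin d)) (x : Fin d → ℝ)
    (hx : ∀ i, 0 ≤ x i ∧ x i ≤ 1) {θ : ℝ} (h0 : 0 ≤ θ) (h1 : θ < 1) :
    sample S x θ ∈ ZeroOne d := by
  intro i
  obtain ⟨hi0, hi1⟩ := hx i
  by_cases hi : i ∈ S
  · simp only [sample, hi, if_true]
    set A := ∑ j ∈ up S i, (1 - x j)
    have h2 : ⌈A - θ⌉ ≤ ⌈A + (1 - x i) - θ⌉ := Int.ceil_mono (by linarith)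
    have h3 : ⌈A + (1 - x i) - θ⌉ ≤ ⌈A - θ⌉ + 1 := by
      rw [← Int.ceil_add_one]
      exact Int.ceil_mono (by linarith)
    rcases (show ⌈A + (1 - x i) - θ⌉ = ⌈A - θ⌉ ∨ ⌈A + (1 - x i) - θ⌉ = ⌈A - θ⌉ + 1 by omega)
      with h | h
    · right; rw [h]; ring
    · left; rw [h]; push_cast; ring
  · simp only [sample, hi, if_false]
    have h2 : -1 < ⌈x i - θ⌉ := by rw [Int.lt_ceil]; push_cast; linarith
    have h3 : ⌈x i - θ⌉ ≤ 1 := by rw [Int.ceil_le]; push_cast; linarith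
    rcases (show ⌈x i - θ⌉ = 0 ∨ ⌈x i - θ⌉ = 1 by omega) with h | h
    · left; rw [h]; simp
    · right; rw [h]; simp

theorem sum_sample {d : ℕ} (S T : Finset (Fin d)) (hTS : T ⊆ S) (hT : ∀ j ∈ T, up T j = up S j)
    (x : Fin d → ℝ) {θ : ℝ} (h0 : 0 ≤ θ) (h1 : θ < 1) :
    ∑ j ∈ T, (1 - sample S x θ j) = ((⌈∑ j ∈ T, (1 - x j) - θ⌉ : ℤ) : ℝ) := by
  have h := sum_telescope T (fun j => 1 - x j) (fun t => ((⌈t - θ⌉ : ℤ) : ℝ))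
  have hz : ⌈0 - θ⌉ = 0 := by rw [Int.ceil_eq_iff]; constructor <;> norm_num <;> linarith
  simp only [hz, Int.cast_zero, sub_zero] at h
  rw [← h]
  apply Finset.sum_congr rfl
  intro j hj
  simp only [sample, hTS hj, if_true, hT j hj]
  ring

theorem sample_mem_Qset {d : ℕ} (S : Finset (Fin d)) (x : Fin d → ℝ) (hx : x ∈ Qset S)
    {θ : ℝ} (h0 : 0 ≤ θ) (h1 : θ < 1) : sample S x θ ∈ Qset S := by
  obtain ⟨hbox, hb, hc⟩ := hx
  refine ⟨fun i => ?_, fun i hi => ?_, ?_⟩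
  · rcases sample_zeroOne S x hbox h0 h1 i with h | h <;> simp [h]
  · rw [sum_sample S (up S i) (Finset.filter_subset _ _) _ x h0 h1]
    · simp only [sample, hi, if_false]
      exact_mod_cast Int.ceil_mono (by linarith [hb i hi])
    · intro j hj
      rw [mem_up] at hj
      ext k
      simp only [mem_up]
      exact ⟨fun h => ⟨h.1.1, h.2⟩, fun h => ⟨⟨h.1, hj.2.trans h.2⟩, h.2⟩⟩
  · rw [sum_sample S S (Finset.Subset.refl _) (fun _ _ => rfl) x h0 h1]
    have : (1 : ℤ) ≤ ⌈∑ j ∈ S, (1 - x j) - θ⌉ := by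
      rw [Int.one_le_ceil_iff]; linarith
    exact_mod_cast this

open MeasureTheory in
/-- Averaging the samples over the threshold `θ ∈ [0, 1)` recovers `x`. -/
theorem mem_Pset_of_mem_Qset {d : ℕ} {v : Fin d → ℝ} (hv : v ∈ ZeroOne d) {x : Fin d → ℝ}
    (hx : x ∈ Qset (Sig v)) : x ∈ Pset v := by
  have hfin : (Xset v).Finite := by
    have : {z : Fin d → ℝ | ∀ i, z i ∈ ({0, 1} : Set ℝ)}.Finite :=
      Set.Finite.pi' (fun _ => Set.toFinite _)
    exact this.subset fun z hz i => by simpa using hz.1 i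
  have hint : ∀ i, Integrable (fun θ => sample (Sig v) x θ i) (volume.restrict (Set.Ico 0 1)) := by
    intro i
    by_cases hi : i ∈ Sig v
    · simp only [sample, hi, if_true]
      exact (integrable_const _).sub ((integrable_ceil _).sub (integrable_ceil _))
    · simp only [sample, hi, if_false]
      exact integrable_ceil _
  have : IsProbabilityMeasure (volume.restrict (Set.Ico (0 : ℝ) 1)) := ⟨by simp⟩
  have key : ∫ θ in Set.Ico (0 : ℝ) 1, sample (Sig v) x θ ∈ Pset v := by
    refine (convex_convexHull ℝ (Xset v)).integral_mem (hfin.isClosed_convexHull ℝ) ?_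
      (Integrable.of_eval hint)
    filter_upwards [ae_restrict_mem measurableSet_Ico] with θ hθ
    exact subset_convexHull ℝ _ (mem_Xset_of_mem_Qset hv (sample_zeroOne _ x hx.1 hθ.1 hθ.2)
      (sample_mem_Qset _ x hx hθ.1 hθ.2))
  have hdiff : ∀ A B : ℝ, ∫ θ in Set.Ico (0 : ℝ) 1,
      (1 - (((⌈B - θ⌉ : ℤ) : ℝ) - ((⌈A - θ⌉ : ℤ) : ℝ))) = 1 - (B - A) := by
    intro A B
    have h1 := integral_sub (integrable_ceil B) (integrable_ceil A)
    have h2 := integral_sub (integrable_const (1 : ℝ))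
      ((integrable_ceil B).sub (integrable_ceil A))
    simp only [Pi.sub_apply] at h2
    rw [h2, h1, integral_ceil, integral_ceil]
    simp
  convert key using 1
  ext i
  rw [eval_integral hint]
  by_cases hi : i ∈ Sig v
  · simp only [sample, hi, if_true]
    rw [hdiff]
    ring
  · simp only [sample, hi, if_false]
    rw [integral_ceil]

theorem convex_Qset {d : ℕ} (S : Finset (Fin d)) : Convex ℝ (Qset S) := by
  intro x hx y hy s t hs ht hst
  obtain ⟨h1, h2, h3⟩ := hx
  obtain ⟨k1, k2, k3⟩ := hy
  have hsum : ∀ T : Finset (Fin d), ∑ j ∈ T, (1 - (s • x + t • y) j) =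
      s * ∑ j ∈ T, (1 - x j) + t * ∑ j ∈ T, (1 - y j) := by
    intro T
    rw [Finset.mul_sum, Finset.mul_sum, ← Finset.sum_add_distrib]
    refine Finset.sum_congr rfl fun j _ => ?_
    simp only [Pi.add_apply, Pi.smul_apply, smul_eq_mul]
    linear_combination -hst
  refine ⟨fun i => ?_, fun i hi => ?_, ?_⟩
  · simp only [Pi.add_apply, Pi.smul_apply, smul_eq_mul]
    have a1 := mul_nonneg hs (h1 i).1
    have a2 := mul_nonneg ht (k1 i).1
    have a3 := mul_le_mul_of_nonneg_left (h1 i).2 hs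
    have a4 := mul_le_mul_of_nonneg_left (k1 i).2 ht
    constructor <;> linarith
  · rw [hsum]
    simp only [Pi.add_apply, Pi.smul_apply, smul_eq_mul]
    exact add_le_add (mul_le_mul_of_nonneg_left (h2 i hi) hs)
      (mul_le_mul_of_nonneg_left (k2 i hi) ht)
  · rw [hsum]
    have a1 := mul_le_mul_of_nonneg_left h3 hs
    have a2 := mul_le_mul_of_nonneg_left k3 ht
    linarith

theorem Pset_eq_Qset {d : ℕ} {v : Fin d → ℝ} (hv : v ∈ ZeroOne d) : Pset v = Qset (Sig v) :=
  Set.Subset.antisymm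
    (convexHull_min (fun _ hx => mem_Qset_of_mem_Xset hv hx) (convex_Qset _))
    (fun _ hx => mem_Pset_of_mem_Qset hv hx)

/-! ### The irredundant description and the number of facets -/

open Classical in
/-- The indices `r` carrying a row inequality `x r + ∑_{j ∈ S, j > r} x j ≤ #{j ∈ S | j > r}`:
the non-members of `S` above `min S`, and `min S` itself. For `r = min S` this inequality is
`∑_{j ∈ S} x j ≤ #S - 1`. -/
noncomputable def rowIdx {d : ℕ} (S : Finset (Fin d)) : Finset (Fin d) :=
  Finset.univ.filter (fun r => (∃ j ∈ S, j ≤ r) ∧ (r ∈ S → ∀ j ∈ S, r ≤ j))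

/-- The support of the row inequality of `r`. -/
def rowSupp {d : ℕ} (S : Finset (Fin d)) (r : Fin d) : Finset (Fin d) := insert r (up S r)

open Classical in
/-- The indices `u` for which `x u ≤ 1` defines a facet: those in no two-element row support. -/
noncomputable def capIdx {d : ℕ} (S : Finset (Fin d)) : Finset (Fin d) :=
  Finset.univ.filter (fun u => ∀ r ∈ rowIdx S, (up S r).card = 1 → u ∉ rowSupp S r)

theorem mem_rowIdx {d : ℕ} {S : Finset (Fin d)} {r : Fin d} :
    r ∈ rowIdx S ↔ (∃ j ∈ S, j ≤ r) ∧ (r ∈ S → ∀ j ∈ S, r ≤ j) := by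
  simp [rowIdx]

theorem mem_capIdx {d : ℕ} {S : Finset (Fin d)} {u : Fin d} :
    u ∈ capIdx S ↔ ∀ r ∈ rowIdx S, (up S r).card = 1 → u ∉ rowSupp S r := by
  simp [capIdx]

theorem self_notMem_up {d : ℕ} (S : Finset (Fin d)) (r : Fin d) : r ∉ up S r := by
  simp [mem_up]

theorem rowSupp_eq {d : ℕ} {S : Finset (Fin d)} {r : Fin d} (hr : r ∈ S)
    (hmin : ∀ j ∈ S, r ≤ j) : rowSupp S r = S := by
  ext j
  simp only [rowSupp, Finset.mem_insert, mem_up]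
  constructor
  · rintro (rfl | h)
    · exact hr
    · exact h.1
  · intro hj
    rcases (hmin j hj).eq_or_lt with h | h
    · exact Or.inl h.symm
    · exact Or.inr ⟨hj, h⟩

/-- The index type of the irredundant description. -/
abbrev Idx {d : ℕ} (S : Finset (Fin d)) : Type :=
  Fin d ⊕ ({r // r ∈ rowIdx S} ⊕ {u // u ∈ capIdx S})

/-- Left-hand sides of the irredundant description. -/
noncomputable def lhs {d : ℕ} (S : Finset (Fin d)) : Idx S → Module.Dual ℝ (Fin d → ℝ)
  | Sum.inl i => -LinearMap.proj i
  | Sum.inr (Sum.inl r) => ∑ j ∈ rowSupp S r, LinearMap.proj j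
  | Sum.inr (Sum.inr u) => LinearMap.proj (u : Fin d)

/-- Right-hand sides of the irredundant description. -/
noncomputable def rhs {d : ℕ} (S : Finset (Fin d)) : Idx S → ℝ
  | Sum.inl _ => 0
  | Sum.inr (Sum.inl r) => ((up S r).card : ℝ)
  | Sum.inr (Sum.inr _) => 1

theorem lhs_inl {d : ℕ} (S : Finset (Fin d)) (i : Fin d) (x : Fin d → ℝ) :
    lhs S (Sum.inl i) x = -x i := by simp [lhs]

theorem lhs_row {d : ℕ} (S : Finset (Fin d)) (r : {r // r ∈ rowIdx S}) (x : Fin d → ℝ) :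
    lhs S (Sum.inr (Sum.inl r)) x = ∑ j ∈ rowSupp S r, x j := by simp [lhs]

theorem lhs_cap {d : ℕ} (S : Finset (Fin d)) (u : {u // u ∈ capIdx S}) (x : Fin d → ℝ) :
    lhs S (Sum.inr (Sum.inr u)) x = x u := by simp [lhs]

section Top

variable {d : ℕ} {S : Finset (Fin d)} {top : Fin d}

theorem lt_top_of_mem_rowIdx (htop : ∀ i, i ≤ top) (hS : 2 ≤ S.card) {r : Fin d}
    (htS : top ∈ S) (hr : r ∈ rowIdx S) : r < top := by
  refine lt_of_le_of_ne (htop r) ?_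
  rintro rfl
  obtain ⟨j, hj, hne⟩ := Finset.exists_mem_ne (by omega : 1 < S.card) r
  exact hne (le_antisymm (htop j) ((mem_rowIdx.1 hr).2 htS j hj))

theorem top_mem_up (htop : ∀ i, i ≤ top) (hS : 2 ≤ S.card) {r : Fin d}
    (htS : top ∈ S) (hr : r ∈ rowIdx S) : top ∈ up S r :=
  mem_up.2 ⟨htS, lt_top_of_mem_rowIdx htop hS htS hr⟩

theorem card_up_pos (htop : ∀ i, i ≤ top) (hS : 2 ≤ S.card) {r : Fin d}
    (htS : top ∈ S) (hr : r ∈ rowIdx S) : 0 < (up S r).card :=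
  Finset.card_pos.2 ⟨_, top_mem_up htop hS htS hr⟩

theorem exists_min (hS : 2 ≤ S.card) : ∃ m ∈ S, m ∈ rowIdx S ∧ ∀ j ∈ S, m ≤ j := by
  have hne : S.Nonempty := Finset.card_pos.1 (by omega)
  exact ⟨S.min' hne, S.min'_mem hne, mem_rowIdx.2 ⟨⟨_, S.min'_mem hne, le_rfl⟩,
    fun _ j hj => S.min'_le j hj⟩, fun j hj => S.min'_le j hj⟩

theorem sum_rowSupp (r : Fin d) (x : Fin d → ℝ) :
    ∑ j ∈ rowSupp S r, x j = x r + ∑ j ∈ up S r, x j :=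
  Finset.sum_insert (self_notMem_up S r)

theorem card_rowSupp (r : Fin d) : (rowSupp S r).card = (up S r).card + 1 :=
  Finset.card_insert_of_notMem (self_notMem_up S r)

/-- Nothing is lost in the irredundant description: a missing bound `x i ≤ 1` follows from a
two-element row containing `i`, and the inequality of an `i` below `min S` from the row of `min S`
together with `x i ≤ 1`. -/
theorem Qset_eq (hS : 2 ≤ S.card) : Qset S = {x | ∀ l, lhs S l x ≤ rhs S l} := by
  obtain ⟨m, hmS, hmR, hmin⟩ := exists_min hS
  have hcompl : ∀ (T : Finset (Fin d)) (x : Fin d → ℝ),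
      ∑ j ∈ T, (1 - x j) = T.card - ∑ j ∈ T, x j := by
    intro T x
    simp
  ext x
  constructor
  · rintro ⟨hbox, hb, hc⟩ l
    rcases l with i | r | u
    · rw [lhs_inl]; simp only [rhs]; linarith [(hbox i).1]
    · rw [lhs_row]; simp only [rhs]
      by_cases hr : (r : Fin d) ∈ S
      · have h1 := rowSupp_eq hr ((mem_rowIdx.1 r.2).2 hr)
        have h2 := card_rowSupp (S := S) r
        rw [h1] at h2 ⊢
        rw [hcompl, h2] at hc
        push_cast at hc
        linarith
      · have := hb r hr
        rw [hcompl] at this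
        rw [sum_rowSupp]
        linarith
    · rw [lhs_cap]; exact (hbox u).2
  · intro hx
    have h0 : ∀ i, 0 ≤ x i := by
      intro i
      have := hx (Sum.inl i)
      rw [lhs_inl] at this
      simp only [rhs] at this
      linarith
    have hrow : ∀ r ∈ rowIdx S, ∑ j ∈ rowSupp S r, x j ≤ (up S r).card := by
      intro r hr
      have := hx (Sum.inr (Sum.inl ⟨r, hr⟩))
      rw [lhs_row] at this
      exact this
    have h1 : ∀ i, x i ≤ 1 := by
      intro i
      by_cases hi : i ∈ capIdx S
      · have := hx (Sum.inr (Sum.inr ⟨i, hi⟩))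
        rw [lhs_cap] at this
        exact this
      · rw [mem_capIdx] at hi
        push Not at hi
        obtain ⟨r, hr, hcard, hir⟩ := hi
        have h2 := hrow r hr
        rw [hcard] at h2
        have h3 := Finset.single_le_sum (f := x) (fun j _ => h0 j) hir
        push_cast at h2
        linarith
    have hc : 1 ≤ ∑ j ∈ S, (1 - x j) := by
      have h2 := hrow m hmR
      have h3 := card_rowSupp (S := S) m
      rw [rowSupp_eq hmS hmin] at h2 h3
      rw [hcompl, h3]
      push_cast
      linarith
    refine ⟨fun i => ⟨h0 i, h1 i⟩, fun i hi => ?_, hc⟩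
    by_cases him : ∃ j ∈ S, j ≤ i
    · have := hrow i (mem_rowIdx.2 ⟨him, fun h => absurd h hi⟩)
      rw [sum_rowSupp] at this
      rw [hcompl]
      linarith
    · push Not at him
      have : up S i = S := Finset.filter_true_of_mem him
      rw [this]
      linarith [h1 i]

/-- Row supports form an antichain. -/
theorem not_rowSupp_subset {r r' : Fin d} (hr : r ∈ rowIdx S) (hr' : r' ∈ rowIdx S)
    (hne : r' ≠ r) : ¬ rowSupp S r' ⊆ rowSupp S r := by
  intro h
  have h1 : r' ∈ rowSupp S r := h (Finset.mem_insert_self _ _)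
  rw [rowSupp, Finset.mem_insert, mem_up] at h1
  rcases h1 with h1 | ⟨h1, h2⟩
  · exact hne h1
  · obtain ⟨j, hj, hjr⟩ := (mem_rowIdx.1 hr).1
    exact absurd ((mem_rowIdx.1 hr').2 h1 j hj) (not_le.2 (hjr.trans_lt h2))

/-- For each inequality of the description, a point violating only that one. -/
noncomputable def violator {d : ℕ} (S : Finset (Fin d)) : Idx S → Fin d → ℝ
  | Sum.inl i => fun j => if j = i then -1 else 0
  | Sum.inr (Sum.inl r) => fun j => if j ∈ rowSupp S r then 1 else 0
  | Sum.inr (Sum.inr u) => fun j => if j = u then 2 else 0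

theorem violator_violates (k : Idx S) : rhs S k < lhs S k (violator S k) := by
  rcases k with i | r | u
  · rw [lhs_inl]; simp [rhs, violator]
  · rw [lhs_row]
    simp only [rhs, violator]
    rw [Finset.sum_congr rfl (fun j hj => if_pos hj), Finset.sum_const, card_rowSupp]
    simp
  · rw [lhs_cap]; simp [rhs, violator]

theorem violator_le (htop : ∀ i, i ≤ top) (hS : 2 ≤ S.card) (htS : top ∈ S) (k l : Idx S)
    (hlk : l ≠ k) : lhs S l (violator S k) ≤ rhs S l := by
  rcases k with i | r | u
  · rcases l with i' | r' | u'
    · have : i' ≠ i := fun h => hlk (by rw [h])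
      rw [lhs_inl]; simp [rhs, violator, this]
    · rw [lhs_row]; simp only [rhs, violator]
      refine (Finset.sum_nonpos fun j _ => ?_).trans (Nat.cast_nonneg _)
      split_ifs <;> norm_num
    · rw [lhs_cap]; simp only [rhs, violator]
      split_ifs <;> norm_num
  · rcases l with i' | r' | u'
    · rw [lhs_inl]; simp only [rhs, violator]
      split_ifs <;> norm_num
    · have hne : (r' : Fin d) ≠ r := fun h => hlk (by rw [Subtype.ext h])
      rw [lhs_row]; simp only [rhs, violator]
      rw [Finset.sum_ite_mem, Finset.sum_const, nsmul_eq_mul, mul_one]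
      have h1 : rowSupp S r' ∩ rowSupp S r ⊂ rowSupp S r' := by
        refine Finset.ssubset_iff_subset_ne.2 ⟨Finset.inter_subset_left, fun h => ?_⟩
        exact not_rowSupp_subset r.2 r'.2 hne (Finset.inter_eq_left.1 h)
      have h2 := Finset.card_lt_card h1
      rw [card_rowSupp] at h2
      exact_mod_cast Nat.lt_succ_iff.1 h2
    · rw [lhs_cap]; simp only [rhs, violator]
      split_ifs <;> norm_num
  · rcases l with i' | r' | u'
    · rw [lhs_inl]; simp only [rhs, violator]
      split_ifs <;> norm_num
    · rw [lhs_row]; simp only [rhs, violator]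
      rw [Finset.sum_ite_eq']
      split_ifs with h
      · have h1 := card_up_pos htop hS htS r'.2
        have h2 : (up S r').card ≠ 1 := fun h2 => mem_capIdx.1 u.2 r' r'.2 h2 h
        exact_mod_cast (by omega : 2 ≤ (up S r').card)
      · exact Nat.cast_nonneg _
    · have hne : (u' : Fin d) ≠ u := fun h => hlk (by rw [Subtype.ext h])
      rw [lhs_cap]; simp [rhs, violator, hne]

theorem interior_point (htop : ∀ i, i ≤ top) (hS : 2 ≤ S.card) (htS : top ∈ S) (l : Idx S) :
    lhs S l (fun _ => 1 / 3) < rhs S l := by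
  rcases l with i | r | u
  · rw [lhs_inl]; simp [rhs]
  · rw [lhs_row]
    simp only [rhs, Finset.sum_const, card_rowSupp, nsmul_eq_mul]
    have : (1 : ℝ) ≤ (up S r).card := by exact_mod_cast card_up_pos htop hS htS r.2
    push_cast
    linarith
  · rw [lhs_cap]; simp only [rhs]; norm_num

/-- The row indices whose row support has exactly two elements. -/
noncomputable def shortRows {d : ℕ} (S : Finset (Fin d)) : Finset (Fin d) :=
  (rowIdx S).filter (fun r => (up S r).card = 1)

/-- The row indices whose row support has at least three elements. -/
noncomputable def longRows {d : ℕ} (S : Finset (Fin d)) : Finset (Fin d) :=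
  (rowIdx S).filter (fun r => 2 ≤ (up S r).card)

theorem card_rows (htop : ∀ i, i ≤ top) (hS : 2 ≤ S.card) (htS : top ∈ S) :
    (shortRows S).card + (longRows S).card = (rowIdx S).card := by
  have := Finset.card_filter_add_card_filter_not (s := rowIdx S) (fun r => (up S r).card = 1)
  rw [← this, shortRows, longRows]
  congr 2
  apply Finset.filter_congr
  intro r hr
  have := card_up_pos htop hS htS hr
  omega

open Classical in
/-- Two-element row supports are the sets `{r, top}` with `r` a short row, so the indices missing
from `capIdx S` are the short rows and, as soon as there is one, `top`. -/
theorem card_capIdx (htop : ∀ i, i ≤ top) (hS : 2 ≤ S.card) (htS : top ∈ S) :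
    (capIdx S).card + (shortRows S).card + (if (shortRows S).Nonempty then 1 else 0) = d := by
  have hsupp : ∀ r ∈ shortRows S, rowSupp S r = {r, top} := by
    intro r hr
    rw [shortRows, Finset.mem_filter] at hr
    obtain ⟨t, ht⟩ := Finset.card_eq_one.1 hr.2
    have := top_mem_up htop hS htS hr.1
    rw [ht, Finset.mem_singleton] at this
    rw [rowSupp, ht, this]
  have hnt : top ∉ shortRows S := by
    intro h
    rw [shortRows, Finset.mem_filter] at h
    exact lt_irrefl _ (lt_top_of_mem_rowIdx htop hS htS h.1)
  have hmem : ∀ u, u ∈ capIdx S ↔ ∀ r ∈ shortRows S, u ≠ r ∧ u ≠ top := by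
    intro u
    rw [mem_capIdx]
    constructor
    · intro h r hr
      have h1 := Finset.mem_filter.1 hr
      have h2 := h r h1.1 h1.2
      rw [hsupp r hr] at h2
      simpa using h2
    · intro h r hr hc
      have h1 : r ∈ shortRows S := Finset.mem_filter.2 ⟨hr, hc⟩
      rw [hsupp r h1]
      simpa using h r h1
  split_ifs with hne
  · have : (capIdx S)ᶜ = insert top (shortRows S) := by
      ext u
      rw [Finset.mem_compl, hmem, Finset.mem_insert]
      constructor
      · intro h
        push Not at h
        obtain ⟨r, hr, h⟩ := h
        by_cases hu : u = r
        · right; rw [hu]; exact hr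
        · left; exact h hu
      · rintro (rfl | hu) h
        · obtain ⟨r, hr⟩ := hne
          exact (h r hr).2 rfl
        · exact (h u hu).1 rfl
    have h1 := Finset.card_add_card_compl (capIdx S)
    rw [this, Finset.card_insert_of_notMem hnt, Fintype.card_fin] at h1
    omega
  · rw [Finset.not_nonempty_iff_eq_empty] at hne
    have : capIdx S = Finset.univ := by
      ext u
      rw [hmem, hne]
      simp
    rw [hne, this]
    simp

open Classical in
theorem card_Idx (htop : ∀ i, i ≤ top) (hS : 2 ≤ S.card) (htS : top ∈ S) :
    Fintype.card (Idx S) + (if (shortRows S).Nonempty then 1 else 0) =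
      2 * d + (longRows S).card := by
  have h1 := card_rows htop hS htS
  have h2 := card_capIdx htop hS htS
  simp only [Fintype.card_sum, Fintype.card_fin, Fintype.card_coe]
  omega

theorem short_of_card_two (hS : S.card = 2) : (shortRows S).Nonempty ∧ longRows S = ∅ := by
  obtain ⟨m, hmS, hmR, hmin⟩ := exists_min hS.ge
  have h1 := card_rowSupp (S := S) m
  rw [rowSupp_eq hmS hmin] at h1
  refine ⟨⟨m, Finset.mem_filter.2 ⟨hmR, by omega⟩⟩, ?_⟩
  refine Finset.filter_eq_empty_iff.2 fun r hr h => ?_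
  obtain ⟨j, hj, hjr⟩ := (mem_rowIdx.1 hr).1
  have : up S r ⊆ up S m := by
    intro k hk
    rw [mem_up] at hk ⊢
    exact ⟨hk.1, ((hmin j hj).trans hjr).trans_lt hk.2⟩
  have := Finset.card_le_card this
  omega

theorem long_of_three_le_card (hS : 3 ≤ S.card) : 0 < (longRows S).card := by
  obtain ⟨m, hmS, hmR, hmin⟩ := exists_min (by omega : 2 ≤ S.card)
  have h1 := card_rowSupp (S := S) m
  rw [rowSupp_eq hmS hmin] at h1
  exact Finset.card_pos.2 ⟨m, Finset.mem_filter.2 ⟨hmR, by omega⟩⟩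

theorem val_lt_of_mem_longRows {r : Fin d} (hr : r ∈ longRows S) : (r : ℕ) < d - 2 := by
  obtain ⟨j, hj, k, hk, hjk⟩ := Finset.one_lt_card.1 (Finset.mem_filter.1 hr).2
  have h1 : r < j := (mem_up.1 hj).2
  have h2 : r < k := (mem_up.1 hk).2
  have h3 : (j : ℕ) ≠ k := fun h => hjk (Fin.ext h)
  rw [Fin.lt_def] at h1 h2
  omega

theorem image_longRows_subset : (longRows S).image Fin.val ⊆ Finset.range (d - 2) := by
  intro n hn
  obtain ⟨r, hr, rfl⟩ := Finset.mem_image.1 hn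
  exact Finset.mem_range.2 (val_lt_of_mem_longRows hr)

theorem card_longRows_le : (longRows S).card ≤ d - 2 := by
  rw [← Finset.card_image_of_injective _ Fin.val_injective, ← Finset.card_range (d - 2)]
  exact Finset.card_le_card image_longRows_subset

theorem card_longRows_eq_iff :
    (longRows S).card = d - 2 ↔ ∀ r : Fin d, (r : ℕ) < d - 2 → r ∈ longRows S := by
  rw [← Finset.card_image_of_injective _ Fin.val_injective]
  constructor
  · intro h r hr
    have := Finset.eq_of_subset_of_card_le (image_longRows_subset (S := S))
      (by rw [h, Finset.card_range])
    have h1 := Finset.mem_range.2 hr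
    rw [← this] at h1
    obtain ⟨r', hr', h2⟩ := Finset.mem_image.1 h1
    rwa [← Fin.ext h2]
  · intro h
    have : (longRows S).image Fin.val = Finset.range (d - 2) := by
      refine Finset.Subset.antisymm image_longRows_subset fun n hn => ?_
      rw [Finset.mem_range] at hn
      exact Finset.mem_image.2 ⟨⟨n, by omega⟩, h _ hn, rfl⟩
    rw [this, Finset.card_range]

/-- The upper bound is attained exactly when all indices below `d - 2` are long rows and there are
no short rows, which forces `S = {0, d - 2, d - 1}`. -/
theorem extremal_iff (hd : 3 ≤ d) (htop : (top : ℕ) = d - 1) (htS : top ∈ S) :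
    ((longRows S).card = d - 2 ∧ ¬ (shortRows S).Nonempty) ↔
      ∀ i : Fin d, i ∈ S ↔ ((i : ℕ) = 0 ∨ (i : ℕ) = d - 2 ∨ (i : ℕ) = d - 1) := by
  rw [card_longRows_eq_iff]
  constructor
  · rintro ⟨h, -⟩
    have hrow : ∀ r : Fin d, (r : ℕ) < d - 2 → r ∈ rowIdx S := fun r hr =>
      (Finset.mem_filter.1 (h r hr)).1
    have h0S : (⟨0, by omega⟩ : Fin d) ∈ S := by
      obtain ⟨j, hj, hj0⟩ := (mem_rowIdx.1 (hrow ⟨0, by omega⟩ (by simp; omega))).1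
      have : j = ⟨0, by omega⟩ := Fin.ext (by rw [Fin.le_def] at hj0; simpa using hj0)
      rwa [← this]
    have hmid : ∀ r : Fin d, (r : ℕ) < d - 2 → (r : ℕ) ≠ 0 → r ∉ S := by
      intro r hr hr0 hrS
      have := (mem_rowIdx.1 (hrow r hr)).2 hrS _ h0S
      rw [Fin.le_def] at this
      simp only at this
      omega
    have hpen : (⟨d - 2, by omega⟩ : Fin d) ∈ S := by
      have h1 := (Finset.mem_filter.1 (h ⟨0, by omega⟩ (by simp; omega))).2
      obtain ⟨j, hj, hjt⟩ := Finset.exists_mem_ne h1 top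
      rw [mem_up, Fin.lt_def] at hj
      have h2 : (j : ℕ) ≠ top := fun h => hjt (Fin.ext h)
      have h3 : ¬ (j : ℕ) < d - 2 := fun h => hmid j h (by have := hj.2; simp only at this; omega) hj.1
      have : j = ⟨d - 2, by omega⟩ := Fin.ext (by simp only; omega)
      rw [← this]; exact hj.1
    intro i
    constructor
    · intro hi
      by_contra hno
      push Not at hno
      exact hmid i (by omega) hno.1 hi
    · rintro (h1 | h1 | h1)
      · rw [show i = ⟨0, by omega⟩ from Fin.ext h1]; exact h0S
      · rw [show i = ⟨d - 2, by omega⟩ from Fin.ext h1]; exact hpen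
      · rw [show i = top from Fin.ext (by omega)]; exact htS
  · intro h
    have h0S : (⟨0, by omega⟩ : Fin d) ∈ S := (h _).2 (by simp)
    have hpen : (⟨d - 2, by omega⟩ : Fin d) ∈ S := (h _).2 (by simp)
    have hup : ∀ r : Fin d, (r : ℕ) < d - 2 → 2 ≤ (up S r).card := by
      intro r hr
      refine Finset.one_lt_card.2 ⟨⟨d - 2, by omega⟩, mem_up.2 ⟨hpen, ?_⟩, top,
        mem_up.2 ⟨htS, ?_⟩, fun h => ?_⟩
      · rw [Fin.lt_def]; exact hr
      · rw [Fin.lt_def]; omega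
      · have := congrArg Fin.val h
        simp only at this
        omega
    constructor
    · intro r hr
      refine Finset.mem_filter.2 ⟨mem_rowIdx.2 ⟨⟨_, h0S, ?_⟩, fun hrS j _ => ?_⟩, hup r hr⟩
      · rw [Fin.le_def]; exact Nat.zero_le _
      · have := (h r).1 hrS
        rw [Fin.le_def]; omega
    · rintro ⟨r, hr⟩
      rw [shortRows, Finset.mem_filter] at hr
      have h1 : ¬ (r : ℕ) < d - 2 := fun h1 => by have := hup r h1; omega
      have h2 : r ∈ S := (h r).2 (by omega)
      have := (mem_rowIdx.1 hr.1).2 h2 _ h0S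
      rw [Fin.le_def] at this
      simp only at this
      omega

end Top

/-- for full-dimensional `P(v)`, the number `f` of facets satisfies
`2d − 1 ≤ f ≤ 3d − 2`; moreover `f = 2d − 1` iff `s(v) = 2`, and for `d ≥ 3`,
`f = 3d − 2` iff `v = e_0 + e_{d−2} + e_{d−1}`. -/
theorem stmt8 (d : ℕ) (hd : 0 < d) (v : Fin d → ℝ) (hv : v ∈ ZeroOne d)
    (hfull : RlexLt (Pi.single (⟨d - 1, by omega⟩ : Fin d) (1 : ℝ)) v)
    (f : ℕ)
    (hf : f = Set.ncard {F : Set (Fin d → ℝ) | IsFaceOf (Pset v) F ∧ adim F = d - 1}) :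
    (2 * d - 1 ≤ f ∧ f ≤ 3 * d - 2) ∧
    (f = 2 * d - 1 ↔ (Sig v).card = 2) ∧
    (3 ≤ d → (f = 3 * d - 2 ↔
      v = fun j : Fin d =>
        if (j : ℕ) = 0 ∨ (j : ℕ) = d - 2 ∨ (j : ℕ) = d - 1 then 1 else 0)) := by
  classical
  set top : Fin d := ⟨d - 1, by omega⟩ with htopdef
  have htop : ∀ i : Fin d, i ≤ top := fun i => by
    rw [Fin.le_def]; have := i.2; simp only [htopdef]; omega
  obtain ⟨m, hm, hgt⟩ := hfull
  have hmtop : m ≠ top := by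
    intro h
    rw [h, Pi.single_eq_same] at hm
    rcases hv top with h | h <;> linarith
  have hmlt : m < top := lt_of_le_of_ne (htop m) hmtop
  have hmS : m ∈ Sig v := by
    rw [Pi.single_eq_of_ne hmtop] at hm
    rcases hv m with h | h
    · linarith
    · exact mem_Sig.2 h
  have htS : top ∈ Sig v := by
    have := hgt top hmlt
    rw [Pi.single_eq_same] at this
    exact mem_Sig.2 this.symm
  have hS : 2 ≤ (Sig v).card := Finset.one_lt_card.2 ⟨m, hmS, top, htS, hmtop⟩
  have hd2 : 2 ≤ d := by
    rw [Fin.lt_def] at hmlt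
    simp only [htopdef] at hmlt
    omega
  have : Nonempty (Idx (Sig v)) := ⟨Sum.inl top⟩
  have hcount : f = Fintype.card (Idx (Sig v)) := by
    rw [hf, Pset_eq_Qset hv, Qset_eq hS]
    exact ncard_facets hd2 (lhs (Sig v)) (rhs (Sig v)) _ (interior_point htop hS htS)
      (violator (Sig v)) violator_violates (violator_le htop hS htS)
  have hcard := card_Idx htop hS htS
  rw [← hcount] at hcard
  have hle := card_longRows_le (S := Sig v)
  have h2 : (Sig v).card = 2 → f = 2 * d - 1 := by
    intro h
    obtain ⟨h3, h4⟩ := short_of_card_two h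
    rw [if_pos h3, h4, Finset.card_empty] at hcard
    omega
  have h3 : (Sig v).card ≠ 2 → 2 * d ≤ f := by
    intro h
    have := long_of_three_le_card (by omega : 3 ≤ (Sig v).card)
    split_ifs at hcard <;> omega
  refine ⟨⟨?_, ?_⟩, ⟨fun h => ?_, h2⟩, fun hd3 => ?_⟩
  · by_cases h : (Sig v).card = 2
    · rw [h2 h]
    · have := h3 h; omega
  · by_cases h : (Sig v).card = 2
    · rw [h2 h]; omega
    · split_ifs at hcard <;> omega
  · by_contra hne
    have := h3 hne
    omega
  · have hext := extremal_iff hd3 (by simp [htopdef]) htS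
    have hv' : (∀ i : Fin d, i ∈ Sig v ↔ ((i : ℕ) = 0 ∨ (i : ℕ) = d - 2 ∨ (i : ℕ) = d - 1)) ↔
        v = fun j : Fin d =>
          if (j : ℕ) = 0 ∨ (j : ℕ) = d - 2 ∨ (j : ℕ) = d - 1 then 1 else 0 := by
      constructor
      · intro h
        funext i
        split_ifs with hi
        · exact mem_Sig.1 ((h i).2 hi)
        · exact (hv i).resolve_right fun h1 => hi ((h i).1 (mem_Sig.2 h1))
      · intro h i
        rw [mem_Sig, congrFun h i]
        split_ifs with hi
        · simp only [hi]
        · simp only [hi, zero_ne_one]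
    rw [← hv', ← hext]
    split_ifs at hcard with hne
    · simp only [hne, not_true_eq_false, and_false, iff_false]
      omega
    · simp only [hne, not_false_eq_true, and_true]
      omega
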